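/- Let N ≥ 1 and 0 ≤ D ≤ N−1. Let Q, R₁, R₂ ∈ ℂ[z] be nonzero with natDegree Q ≤ D and natDegree Rᵢ ≤ N−1−D, and set Xᵢ = Q·Rᵢ for i = 1,2. Assume R₁ and R₂ are coprime in ℂ[z], and that their conjugate reflections at degree N−1−D are coprime in ℂ[z]. Let Γᵢⱼ = Xᵢ·X̃ⱼ for i, j ∈ {1,2}, where X̃ⱼ is the conjugate reflection of Xⱼ at degree N−1. Then the greatest common divisor of Γ₁₁, Γ₁₂, Γ₂₁, Γ₂₂ in ℂ[z] is associated to Q·Q̃, where Q̃ is the conjugate reflection of Q at degree D; that is, gcd(Γ₁₁, Γ₁₂, Γ₂₁, Γ₂₂) = c·Q·Q̃ for some nonzero constant c ∈ ℂ. -/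

import Mathlib

open Polynomial

/-- The conjugate reflection of a polynomial `A` at degree `D`:
`Ã(z) = ∑_{n=0}^{D} conj(A.coeff (D−n))·zⁿ`. -/
noncomputable def conjReflect (D : ℕ) (A : Polynomial ℂ) : Polynomial ℂ :=
  (A.map (starRingEnd ℂ)).reflect D

/-! Since `ℂ[z]` is a principal ideal domain, a gcd is a generator of the ideal spanned by its
arguments. The four products `Γᵢⱼ = Xᵢ X̃ⱼ` span the product of ideals `(X₁, X₂) (X̃₁, X̃₂)`.
Conjugate reflection is multiplicative when the reflection degrees add up, so `X̃ⱼ = Q̃ R̃ⱼ`, and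
coprimality of `R₁, R₂` and of `R̃₁, R̃₂` turns the two factors into `(Q)` and `(Q̃)`. -/

theorem conjReflect_mul {m n : ℕ} {f g : ℂ[X]} (hf : f.natDegree ≤ m) (hg : g.natDegree ≤ n) :
    conjReflect (m + n) (f * g) = conjReflect m f * conjReflect n g := by
  unfold conjReflect
  rw [Polynomial.map_mul]
  exact reflect_mul _ _ (natDegree_map_le.trans hf) (natDegree_map_le.trans hg)

theorem span_pair_mul_left_of_isCoprime {R : Type*} [CommSemiring R] {r s : R}
    (h : IsCoprime r s) (q : R) : Ideal.span {q * r, q * s} = Ideal.span {q} := by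
  have span_pair_eq_top : Ideal.span {r, s} = ⊤ := by
    rwa [Ideal.span_insert, ← Ideal.isCoprime_iff_sup_eq, Ideal.isCoprime_span_singleton_iff]
  calc Ideal.span {q * r, q * s}
      = Ideal.span {q} * Ideal.span {r, s} := by
        simp only [Ideal.span_insert, Ideal.mul_sup, Ideal.span_singleton_mul_span_singleton]
    _ = Ideal.span {q} := by rw [span_pair_eq_top, Ideal.mul_top]

section

variable {R : Type*} [EuclideanDomain R] [DecidableEq R]

theorem span_gcd_pairwise_mul (a b c d : R) :
    Ideal.span {EuclideanDomain.gcd (a * c) (EuclideanDomain.gcd (a * d)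
      (EuclideanDomain.gcd (b * c) (b * d)))} = Ideal.span {a, b} * Ideal.span {c, d} := by
  rw [Ideal.span_pair_mul_span_pair]
  simp only [EuclideanDomain.span_gcd, Ideal.span_insert]

theorem associated_gcd_pairwise_mul_of_isCoprime {r₁ r₂ s₁ s₂ : R} (hr : IsCoprime r₁ r₂)
    (hs : IsCoprime s₁ s₂) (q t : R) :
    Associated
      (EuclideanDomain.gcd (q * r₁ * (t * s₁)) (EuclideanDomain.gcd (q * r₁ * (t * s₂))
        (EuclideanDomain.gcd (q * r₂ * (t * s₁)) (q * r₂ * (t * s₂)))))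
      (q * t) := by
  rw [← Ideal.span_singleton_eq_span_singleton, span_gcd_pairwise_mul,
    span_pair_mul_left_of_isCoprime hr, span_pair_mul_left_of_isCoprime hs,
    Ideal.span_singleton_mul_span_singleton]

end

theorem exists_eq_C_mul_of_associated {R : Type*} [CommSemiring R] [NoZeroDivisors R] {f g : R[X]}
    (h : Associated f g) : ∃ c : R, IsUnit c ∧ f = C c * g := by
  obtain ⟨u, rfl⟩ := h.symm
  obtain ⟨c, hc, hu⟩ := isUnit_iff.mp u.isUnit
  exact ⟨c, hc, by rw [hu, mul_comm]⟩

/-- Lemma 2, part 1. If `Xᵢ = Q·Rᵢ` with `R₁, R₂` coprime and their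
conjugate reflections coprime, then the GCD of the four measurement polynomials
`Γᵢⱼ = Xᵢ·X̃ⱼ` is associated to `Q·Q̃`: it equals `c·Q·Q̃` for some nonzero `c ∈ ℂ`. -/
theorem gcd_measurement_polys_eq_Q_mul_conjReflect_Q
    (N D : ℕ) (hN : 1 ≤ N) (hD : D ≤ N - 1)
    (Q R₁ R₂ : Polynomial ℂ) (hQ : Q ≠ 0) (hR₁ : R₁ ≠ 0) (hR₂ : R₂ ≠ 0)
    (hdQ : Q.natDegree ≤ D)
    (hdR₁ : R₁.natDegree ≤ N - 1 - D) (hdR₂ : R₂.natDegree ≤ N - 1 - D)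
    (hcop : IsCoprime R₁ R₂)
    (hcopR : IsCoprime (conjReflect (N - 1 - D) R₁) (conjReflect (N - 1 - D) R₂)) :
    ∃ c : ℂ, c ≠ 0 ∧
      EuclideanDomain.gcd (Q * R₁ * conjReflect (N - 1) (Q * R₁))
        (EuclideanDomain.gcd (Q * R₁ * conjReflect (N - 1) (Q * R₂))
          (EuclideanDomain.gcd (Q * R₂ * conjReflect (N - 1) (Q * R₁))
            (Q * R₂ * conjReflect (N - 1) (Q * R₂))))
      = Polynomial.C c * (Q * conjReflect D Q) := by
  have conjReflect_Q_mul {R : ℂ[X]} (hR : R.natDegree ≤ N - 1 - D) :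
      conjReflect (N - 1) (Q * R) = conjReflect D Q * conjReflect (N - 1 - D) R := by
    rw [← conjReflect_mul hdQ hR, Nat.add_sub_cancel' hD]
  rw [conjReflect_Q_mul hdR₁, conjReflect_Q_mul hdR₂]
  obtain ⟨c, hc, hgcd⟩ := exists_eq_C_mul_of_associated
    (associated_gcd_pairwise_mul_of_isCoprime hcop hcopR Q (conjReflect D Q))
  exact ⟨c, hc.ne_zero, hgcd⟩
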